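/- A real matrix A is stable if and only if there exist a skew-symmetric matrix J, a symmetric positive-definite matrix R, and a symmetric positive-definite matrix Q such that A = (J − R)Q. -/

import Mathlib

open Matrix

/-!
If `A = (J - R) Q` and `A v = μ v` with `v = a + i b`, then pairing the real and imaginary parts
of the eigenvalue equation with `Q a` and `Q b` gives
`Re μ (aᵀQa + bᵀQb) = -((Qa)ᵀR(Qa) + (Qb)ᵀR(Qb))`, because `J` contributes nothing; hence
`Re μ < 0` (`re_neg_of_decomposition`).

Conversely, a stable `A` has a Lyapunov matrix: some positive-definite `P` with `Aᵀ P + P A`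
negative definite (`exists_lyapunov`). It is found in discrete time. The Cayley transform
`B = (1 + A) (1 - A)⁻¹` has its spectrum in the open unit disc, so by Gelfand's formula some power
`B ^ (N + 1)` is a strict contraction. The finite sum `P = ∑ k ≤ N, (Bᵀ)ᵏ Bᵏ` telescopes:
`P - Bᵀ P B = 1 - (Bᵀ)ᴺ⁺¹ Bᴺ⁺¹` is positive definite, and congruence by `1 - A` turns the left side
into `-2 (Aᵀ P + P A)`. Then `Q = P`, with `J` and `-R` the skew-symmetric and symmetric parts of
`A P⁻¹`, is the required decomposition.
-/

/-- A consequence of Gelfand's formula. -/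
lemma exists_norm_pow_lt_one {𝔸 : Type*} [NormedRing 𝔸] [NormedAlgebra ℂ 𝔸] [CompleteSpace 𝔸]
    (a : 𝔸) (h : ∀ k ∈ spectrum ℂ a, ‖k‖ < 1) : ∃ N : ℕ, ‖a ^ (N + 1)‖ < 1 := by
  rcases subsingleton_or_nontrivial 𝔸 with _ | _
  · exact ⟨0, by rw [Subsingleton.elim (a ^ (0 + 1)) 0]; simp⟩
  have hr : spectralRadius ℂ a < ((1 : NNReal) : ENNReal) :=
    spectrum.spectralRadius_lt_of_forall_lt_of_nonempty (spectrum.nonempty a)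
      (fun k hk => by exact_mod_cast h k hk)
  have ht := spectrum.pow_nnnorm_pow_one_div_tendsto_nhds_spectralRadius a
  obtain ⟨N, hN⟩ := Filter.eventually_atTop.1 (ht.eventually (gt_mem_nhds hr))
  refine ⟨N, ?_⟩
  have h1 := hN (N + 1) (by omega)
  by_contra! hc
  have h2 : (1 : ENNReal) ≤ (‖a ^ (N + 1)‖₊ : ENNReal) := by
    exact_mod_cast hc
  have h3 := ENNReal.one_le_rpow h2 (z := 1 / ((N + 1 : ℕ) : ℝ)) (by positivity)
  simp only [ENNReal.coe_one] at h1
  exact absurd h1 (not_lt.2 h3)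

/-- The Cayley transform `z ↦ (1 + z) / (1 - z)` maps a spectrum in the open left half-plane into
the open unit disc. -/
lemma cayley_spectrum {𝔸 : Type*} [Ring 𝔸] [Algebra ℂ 𝔸] (a s : 𝔸)
    (h1 : s * (1 - a) = 1) (h2 : (1 - a) * s = 1)
    (ha : ∀ μ ∈ spectrum ℂ a, μ.re < 0) :
    ∀ k ∈ spectrum ℂ ((1 + a) * s), ‖k‖ < 1 := by
  intro k hk
  by_contra! hc
  rw [spectrum.mem_iff] at hk
  apply hk
  have hs : IsUnit s := ⟨⟨s, 1 - a, h1, h2⟩, rfl⟩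
  have key : algebraMap ℂ 𝔸 k - (1 + a) * s = (algebraMap ℂ 𝔸 (k - 1) - (k + 1) • a) * s := by
    calc algebraMap ℂ 𝔸 k - (1 + a) * s
        = algebraMap ℂ 𝔸 k * ((1 - a) * s) - (1 + a) * s := by rw [h2, mul_one]
      _ = _ := by
        simp only [Algebra.smul_def, map_sub, map_add, map_one]
        noncomm_ring
  rw [key]
  refine IsUnit.mul ?_ hs
  by_cases hk1 : k + 1 = 0
  · have : k - 1 = -2 := by linear_combination hk1
    rw [hk1, this, zero_smul, sub_zero]
    exact (IsUnit.mk0 (-2 : ℂ) (by norm_num)).map (algebraMap ℂ 𝔸)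
  · have hmem : (k - 1) / (k + 1) ∉ spectrum ℂ a := by
      intro hm
      -- the Möbius preimage of `k` lies in the closed right half-plane, as `1 ≤ ‖k‖`
      have := ha _ hm
      rw [Complex.div_re, ← add_div] at this
      have hp : 0 < Complex.normSq (k + 1) := Complex.normSq_pos.2 hk1
      have h3 := (div_lt_iff₀ hp).1 this
      have h4 : 1 ≤ Complex.normSq k := by
        rw [Complex.normSq_eq_norm_sq]; nlinarith
      rw [Complex.normSq_apply] at h4
      simp at h3
      nlinarith
    have hu := spectrum.notMem_iff.1 hmem
    have : algebraMap ℂ 𝔸 (k - 1) - (k + 1) • a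
        = algebraMap ℂ 𝔸 (k + 1) * (algebraMap ℂ 𝔸 ((k - 1) / (k + 1)) - a) := by
      rw [mul_sub, ← map_mul, mul_div_cancel₀ _ hk1, Algebra.smul_def]
    rw [this]
    exact ((IsUnit.mk0 _ hk1).map (algebraMap ℂ 𝔸)).mul hu

open scoped Matrix.Norms.L2Operator in
/-- The norm is that of the complexification, since Gelfand's formula needs complex scalars. -/
lemma posDef_one_sub {n : ℕ} (C : Matrix (Fin n) (Fin n) ℝ)
    (h : ‖C.map (algebraMap ℝ ℂ)‖ < 1) : (1 - Cᵀ * C).PosDef := by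
  refine PosDef.of_dotProduct_mulVec_pos ?_ ?_
  · simp [IsHermitian, conjTranspose_eq_transpose_of_trivial]
  intro x hx
  set y : EuclideanSpace ℂ (Fin n) := WithLp.toLp 2 (fun i => (x i : ℂ)) with hy
  have h1 := l2_opNorm_mulVec (C.map (algebraMap ℝ ℂ)) y
  have hy0 : 0 < ‖y‖ := by
    rw [norm_pos_iff]
    intro h0
    apply hx
    ext i
    have := congrArg (fun z : EuclideanSpace ℂ (Fin n) => z i) h0
    simpa [hy] using this
  have h2 : ‖(EuclideanSpace.equiv (Fin n) ℂ).symm (C.map (algebraMap ℝ ℂ) *ᵥ y.ofLp)‖ ^ 2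
      < ‖y‖ ^ 2 := by
    have : ‖C.map (algebraMap ℝ ℂ)‖ * ‖y‖ < ‖y‖ := by nlinarith
    exact pow_lt_pow_left₀ (lt_of_le_of_lt h1 this) (norm_nonneg _) (by norm_num)
  have h3 : ∀ i, (C.map (algebraMap ℝ ℂ) *ᵥ y.ofLp) i = (((C *ᵥ x) i : ℝ) : ℂ) := by
    intro i
    simp [mulVec, dotProduct, hy]
  rw [EuclideanSpace.norm_sq_eq, EuclideanSpace.norm_sq_eq] at h2
  have h4 : ∑ i, (C *ᵥ x) i ^ 2 < ∑ i, x i ^ 2 := by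
    have e : ∀ i, ((EuclideanSpace.equiv (Fin n) ℂ).symm
      (C.map (algebraMap ℝ ℂ) *ᵥ y.ofLp)).ofLp i = (((C *ᵥ x) i : ℝ) : ℂ) := h3
    simp only [e] at h2
    simpa [hy] using h2
  have h5 : star x ⬝ᵥ (1 - Cᵀ * C) *ᵥ x = ∑ i, x i ^ 2 - ∑ i, (C *ᵥ x) i ^ 2 := by
    rw [sub_mulVec, dotProduct_sub, one_mulVec, ← mulVec_mulVec, dotProduct_mulVec _ Cᵀ,
      vecMul_transpose]
    simp [dotProduct, sq]
  rw [h5]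
  linarith

/-- The finite sum solves the discrete Lyapunov (Stein) equation up to its last term. -/
lemma stein_telescope {n : ℕ} (B : Matrix (Fin n) (Fin n) ℝ) (N : ℕ) :
    (∑ k ∈ Finset.range N, Bᵀ ^ k * B ^ k) - Bᵀ * (∑ k ∈ Finset.range N, Bᵀ ^ k * B ^ k) * B
      = 1 - Bᵀ ^ N * B ^ N := by
  induction N with
  | zero => simp
  | succ N ih =>
    have e : Bᵀ ^ (N + 1) * B ^ (N + 1) = Bᵀ * (Bᵀ ^ N * B ^ N) * B := by
      rw [pow_succ', pow_succ]; noncomm_ring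
    rw [Finset.sum_range_succ, mul_add, add_mul, ← e, add_sub_add_comm, ih]
    abel

open scoped Matrix.Norms.L2Operator in
/-- Lyapunov's theorem: a stable real matrix `A` admits a positive-definite `P` with `Aᵀ P + P A`
negative definite. -/
lemma exists_lyapunov {n : ℕ} (A : Matrix (Fin n) (Fin n) ℝ)
    (hA : ∀ μ ∈ spectrum ℂ (A.map (algebraMap ℝ ℂ)), μ.re < 0) :
    ∃ P : Matrix (Fin n) (Fin n) ℝ, P.PosDef ∧ (-(Aᵀ * P + P * A)).PosDef := by
  let f : Matrix (Fin n) (Fin n) ℝ →+* Matrix (Fin n) (Fin n) ℂ := (algebraMap ℝ ℂ).mapMatrix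
  have hf : ∀ M, f M = M.map (algebraMap ℝ ℂ) := fun _ => rfl
  have hdet : IsUnit (1 - A).det := by
    have h1 : (1 : ℂ) ∉ spectrum ℂ (f A) := fun h => by
      have := hA 1 h
      norm_num at this
    have h2 := spectrum.notMem_iff.1 h1
    rw [map_one, ← map_one f, ← map_sub, isUnit_iff_isUnit_det, ← RingHom.map_det] at h2
    rw [isUnit_iff_ne_zero] at h2 ⊢
    exact fun h => h2 (by rw [h, map_zero])
  set S := (1 - A)⁻¹ with hS
  have hS1 : S * (1 - A) = 1 := nonsing_inv_mul _ hdet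
  have hS2 : (1 - A) * S = 1 := mul_nonsing_inv _ hdet
  set B := (1 + A) * S with hB
  have hBA : B * (1 - A) = 1 + A := by rw [hB, mul_assoc, hS1, mul_one]
  have hspec : ∀ k ∈ spectrum ℂ (f B), ‖k‖ < 1 := by
    have := cayley_spectrum (f A) (f S) (by rw [← map_one f, ← map_sub, ← map_mul, hS1])
      (by rw [← map_one f, ← map_sub, ← map_mul, hS2]) hA
    rwa [← map_one f, ← map_add, ← map_mul] at this
  obtain ⟨N, hN⟩ := exists_norm_pow_lt_one (f B) hspec
  rw [← map_pow, hf] at hN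
  have hE := posDef_one_sub _ hN
  rw [transpose_pow, ← stein_telescope] at hE
  set P := ∑ k ∈ Finset.range (N + 1), Bᵀ ^ k * B ^ k with hP
  refine ⟨P, ?_, ?_⟩
  · rw [hP, Finset.sum_range_succ', add_comm]
    refine PosDef.add_posSemidef (by simpa using PosDef.one) (posSemidef_sum _ fun k _ => ?_)
    have := posSemidef_conjTranspose_mul_self (B ^ (k + 1))
    rwa [conjTranspose_eq_transpose_of_trivial, transpose_pow] at this
  · have hinj : Function.Injective (1 - A).mulVec :=
      mulVec_injective_iff_isUnit.2 ((isUnit_iff_isUnit_det _).2 hdet)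
    have h := (hE.conjTranspose_mul_mul_same hinj).smul (show (0 : ℝ) < 1 / 2 by norm_num)
    have e : (1 - A)ᴴ * (P - Bᵀ * P * B) * (1 - A) = (2 : ℝ) • -(Aᵀ * P + P * A) := by
      have hT : (1 - A)ᵀ * Bᵀ = (1 + A)ᵀ := by rw [← transpose_mul, hBA]
      calc (1 - A)ᴴ * (P - Bᵀ * P * B) * (1 - A)
          = (1 - A)ᵀ * P * (1 - A) - ((1 - A)ᵀ * Bᵀ) * P * (B * (1 - A)) := by
            rw [conjTranspose_eq_transpose_of_trivial]; noncomm_ring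
        _ = _ := by
            rw [hT, hBA, transpose_sub, transpose_add, transpose_one, two_smul]; noncomm_ring
    rw [e, smul_smul] at h
    norm_num at h
    simpa using h

lemma skew_dotProduct {n : ℕ} {J : Matrix (Fin n) (Fin n) ℝ} (hJ : Jᵀ = -J) (x : Fin n → ℝ) :
    x ⬝ᵥ J *ᵥ x = 0 := by
  have h : x ⬝ᵥ J *ᵥ x = -(x ⬝ᵥ J *ᵥ x) := by
    conv_lhs => rw [dotProduct_mulVec, ← mulVec_transpose, hJ, neg_mulVec, neg_dotProduct,
      dotProduct_comm]
  linarith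

lemma re_neg_of_decomposition {n : ℕ} {J R Q : Matrix (Fin n) (Fin n) ℝ}
    (hJ : Jᵀ = -J) (hR : R.PosDef) (hQ : Q.PosDef) {μ : ℂ}
    (hμ : μ ∈ spectrum ℂ (((J - R) * Q).map (algebraMap ℝ ℂ))) : μ.re < 0 := by
  set A := (J - R) * Q with hA
  rw [← spectrum_toLin', ← Module.End.hasEigenvalue_iff_mem_spectrum] at hμ
  obtain ⟨v, hv⟩ := hμ.exists_hasEigenvector
  have hv0 := hv.2
  have hAv : A.map (algebraMap ℝ ℂ) *ᵥ v = μ • v := by simpa using hv.apply_eq_smul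
  set a : Fin n → ℝ := fun i => (v i).re with ha
  set b : Fin n → ℝ := fun i => (v i).im with hb
  have hAa : A *ᵥ a = μ.re • a - μ.im • b := by
    ext i
    have := congrArg Complex.re (congrFun hAv i)
    simpa [mulVec, dotProduct, ha, hb] using this
  have hAb : A *ᵥ b = μ.re • b + μ.im • a := by
    ext i
    have := congrArg Complex.im (congrFun hAv i)
    simpa [mulVec, dotProduct, ha, hb] using this
  have hQT : Qᵀ = Q := by
    have := hQ.isHermitian.eq
    rwa [conjTranspose_eq_transpose_of_trivial] at this
  have hsym : ∀ x y : Fin n → ℝ, Q *ᵥ x ⬝ᵥ y = x ⬝ᵥ Q *ᵥ y := fun x y => by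
    rw [dotProduct_mulVec, ← mulVec_transpose, hQT]
  have hform : ∀ x : Fin n → ℝ, Q *ᵥ x ⬝ᵥ A *ᵥ x = -(Q *ᵥ x ⬝ᵥ R *ᵥ (Q *ᵥ x)) := fun x => by
    rw [hA, ← mulVec_mulVec, sub_mulVec, dotProduct_sub, skew_dotProduct hJ, zero_sub]
  have hid : μ.re * (a ⬝ᵥ Q *ᵥ a + b ⬝ᵥ Q *ᵥ b)
      = -(Q *ᵥ a ⬝ᵥ R *ᵥ (Q *ᵥ a) + Q *ᵥ b ⬝ᵥ R *ᵥ (Q *ᵥ b)) := by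
    have h1 := hform a
    have h2 := hform b
    have h3 : a ⬝ᵥ Q *ᵥ b = b ⬝ᵥ Q *ᵥ a := by rw [← hsym, dotProduct_comm]
    rw [hAa, hsym, mulVec_sub, mulVec_smul, mulVec_smul, dotProduct_sub, dotProduct_smul,
      dotProduct_smul, smul_eq_mul, smul_eq_mul] at h1
    rw [hAb, hsym, mulVec_add, mulVec_smul, mulVec_smul, dotProduct_add, dotProduct_smul,
      dotProduct_smul, smul_eq_mul, smul_eq_mul] at h2
    linear_combination h1 + h2 + μ.im * h3
  have hQinj : ∀ x : Fin n → ℝ, x ≠ 0 → Q *ᵥ x ≠ 0 := fun x hx h => by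
    have := hQ.dotProduct_mulVec_pos hx
    simp [h] at this
  have hpos : ∀ {M : Matrix (Fin n) (Fin n) ℝ}, M.PosDef → ∀ x, x ≠ 0 → 0 < x ⬝ᵥ M *ᵥ x :=
    fun hM x hx => by simpa using hM.dotProduct_mulVec_pos hx
  have hnn : ∀ {M : Matrix (Fin n) (Fin n) ℝ}, M.PosDef → ∀ x, 0 ≤ x ⬝ᵥ M *ᵥ x :=
    fun hM x => by simpa using hM.posSemidef.dotProduct_mulVec_nonneg x
  have hab : a ≠ 0 ∨ b ≠ 0 := by
    by_contra! h
    exact hv0 (funext fun i => Complex.ext (congrFun h.1 i) (congrFun h.2 i))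
  by_contra! hre
  have hlhs := mul_nonneg hre (add_nonneg (hnn hQ a) (hnn hQ b))
  rcases hab with h | h
  · linarith [hpos hR _ (hQinj a h), hnn hR (Q *ᵥ b)]
  · linarith [hpos hR _ (hQinj b h), hnn hR (Q *ᵥ a)]

/-- A real matrix is stable iff it can be written as `(J − R) Q` with `J` skew-symmetric and
`R`, `Q` symmetric positive-definite. -/
theorem stable_iff_decomposition {n : ℕ} (A : Matrix (Fin n) (Fin n) ℝ) :
    (∀ μ ∈ spectrum ℂ (A.map (algebraMap ℝ ℂ)), μ.re < 0) ↔
    ∃ J R Q : Matrix (Fin n) (Fin n) ℝ,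
      Jᵀ = -J ∧ R.PosDef ∧ Q.PosDef ∧ A = (J - R) * Q := by
  constructor
  · intro hA
    obtain ⟨P, hP, hK⟩ := exists_lyapunov A hA
    have hdet : IsUnit P.det := (isUnit_iff_isUnit_det _).1 hP.isUnit
    have hPT : P⁻¹ᵀ = P⁻¹ := by
      have := hP.inv.isHermitian.eq
      rwa [conjTranspose_eq_transpose_of_trivial] at this
    have h1 : P⁻¹ * P = 1 := nonsing_inv_mul _ hdet
    have h2 : P * P⁻¹ = 1 := mul_nonsing_inv _ hdet
    refine ⟨(1 / 2 : ℝ) • (A * P⁻¹ - P⁻¹ * Aᵀ), (1 / 2 : ℝ) • -(P⁻¹ * Aᵀ + A * P⁻¹), P,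
      ?_, ?_, hP, ?_⟩
    · rw [transpose_smul, transpose_sub, transpose_mul, transpose_mul, hPT, transpose_transpose,
        ← smul_neg, neg_sub]
    · refine PosDef.smul ?_ (by norm_num)
      have h := hK.conjTranspose_mul_mul_same
        (mulVec_injective_iff_isUnit.2 hP.inv.isUnit)
      have e : P⁻¹ᴴ * -(Aᵀ * P + P * A) * P⁻¹ = -(P⁻¹ * Aᵀ + A * P⁻¹) := by
        calc P⁻¹ᴴ * -(Aᵀ * P + P * A) * P⁻¹
            = -(P⁻¹ * Aᵀ * (P * P⁻¹) + (P⁻¹ * P) * A * P⁻¹) := by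
              rw [conjTranspose_eq_transpose_of_trivial, hPT]; noncomm_ring
          _ = _ := by rw [h1, h2, mul_one, one_mul]
      rwa [e] at h
    · rw [← smul_sub, show A * P⁻¹ - P⁻¹ * Aᵀ - -(P⁻¹ * Aᵀ + A * P⁻¹) = (2 : ℝ) • (A * P⁻¹) by
        rw [two_smul]; abel, smul_smul]
      norm_num
      rw [mul_assoc, h1, mul_one]
  · rintro ⟨J, R, Q, hJ, hR, hQ, rfl⟩ μ hμ
    exact re_neg_of_decomposition hJ hR hQ hμ
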